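/- For every n ≥ 1, the numbers of parity-reversing pairings on [2n] with exactly 4 and exactly 5 crossings are r_{n,4} = 2·C(2n, n−4) and r_{n,5} = 2·C(2n, n−5), with the convention that C(2n, n−ℓ) = 0 when ℓ > n. -/

import Mathlib

open scoped Classical

/-- Asymmetric crossing of two chords: `B = {a,b}` with `a < b` starts strictly
before `C = {c,d}` and they interleave: `a < c < b < d`. -/
def CrossAsym (B C : Finset ℕ) : Prop :=
  ∃ a b c d : ℕ, a < c ∧ c < b ∧ b < d ∧ B = {a, b} ∧ C = {c, d}

/-- Two blocks cross: `a < c < b < d` or `c < a < d < b`. -/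
def Crosses (B C : Finset ℕ) : Prop := CrossAsym B C ∨ CrossAsym C B

/-- A pairing on `[2n] = {1, …, 2n}`: a partition of `{1, …, 2n}` into blocks of size 2. -/
def IsPairing (n : ℕ) (π : Finset (Finset ℕ)) : Prop :=
  (∀ B ∈ π, B.card = 2 ∧ B ⊆ Finset.Icc 1 (2 * n)) ∧
  (∀ x ∈ Finset.Icc 1 (2 * n), ∃! B, B ∈ π ∧ x ∈ B)

/-- Number of crossings of a pairing: the number of unordered pairs of blocks that cross
(each crossing unordered pair `{B, C}` satisfies the asymmetric condition exactly once). -/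
noncomputable def crNum (π : Finset (Finset ℕ)) : ℕ :=
  Set.ncard {p : Finset ℕ × Finset ℕ | p.1 ∈ π ∧ p.2 ∈ π ∧ CrossAsym p.1 p.2}

/-- A pairing is parity-reversing if each block consists of one odd and one even number. -/
def ParityReversing (π : Finset (Finset ℕ)) : Prop :=
  ∀ B ∈ π, ∃ a b : ℕ, B = {a, b} ∧ Odd a ∧ Even b

/-- A pairing is connected if its blocks cannot be split into two nonempty families
with no crossing between the families. -/
def ConnectedPairing (π : Finset (Finset ℕ)) : Prop :=
  ¬ ∃ S T : Finset (Finset ℕ), S ∪ T = π ∧ Disjoint S T ∧ S.Nonempty ∧ T.Nonempty ∧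
      ∀ B ∈ S, ∀ C ∈ T, ¬ Crosses B C

/-- `tCount n k`: the number of pairings on `[2n]` with exactly `k` crossings. -/
noncomputable def tCount (n k : ℕ) : ℕ :=
  Set.ncard {π : Finset (Finset ℕ) | IsPairing n π ∧ crNum π = k}

/-- `rCount n k`: the number of parity-reversing pairings on `[2n]` with exactly `k` crossings. -/
noncomputable def rCount (n k : ℕ) : ℕ :=
  Set.ncard {π : Finset (Finset ℕ) | IsPairing n π ∧ ParityReversing π ∧ crNum π = k}

/-- `bCount n k`: the number of connected parity-reversing pairings on `[2n]`
with exactly `k` crossings. -/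
noncomputable def bCount (n k : ℕ) : ℕ :=
  Set.ncard {π : Finset (Finset ℕ) |
    IsPairing n π ∧ ParityReversing π ∧ ConnectedPairing π ∧ crNum π = k}

/-- `bTot n`: the number of connected parity-reversing pairings on `[2n]` (equals 1 for `n = 0`). -/
noncomputable def bTot (n : ℕ) : ℕ :=
  Set.ncard {π : Finset (Finset ℕ) |
    IsPairing n π ∧ ParityReversing π ∧ ConnectedPairing π}

/-- The Touchard alternating sum `∑_{k=-n}^n (-1)^k q^{k(k-1)/2} C(2n, n+k)`. -/
noncomputable def touchardSum (n : ℕ) (q : ℂ) : ℂ :=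
  ∑ k ∈ Finset.Icc (-(n : ℤ)) (n : ℤ),
    (-1 : ℂ) ^ k * q ^ ((k * (k - 1)) / 2).toNat * ((2 * n).choose ((n : ℤ) + k).toNat : ℂ)

/-- `T_n(q) = ∑_k t_{n,k} q^k` as a complex polynomial function
(all crossing numbers of pairings on `[2n]` satisfy `k ≤ n*n`). -/
noncomputable def Tpoly (n : ℕ) (q : ℂ) : ℂ :=
  ∑ k ∈ Finset.range (n * n + 1), (tCount n k : ℂ) * q ^ k

/-- `T_n(q) = ∑_k t_{n,k} q^k` as a real polynomial function. -/
noncomputable def TpolyR (n : ℕ) (q : ℝ) : ℝ :=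
  ∑ k ∈ Finset.range (n * n + 1), (tCount n k : ℝ) * q ^ k

/-- `R_n(q) = ∑_k r_{n,k} q^k` as a real polynomial function. -/
noncomputable def RpolyR (n : ℕ) (q : ℝ) : ℝ :=
  ∑ k ∈ Finset.range (n * n + 1), (rCount n k : ℝ) * q ^ k

/-- Non-crossing partitions of `{1, …, 2n}` all of whose blocks have even size. -/
noncomputable def NCEvenPartitions (n : ℕ) : Finset (Finset (Finset ℕ)) :=
  ((Finset.Icc 1 (2 * n)).powerset.powerset).filter (fun π =>
    (∀ B ∈ π, B.Nonempty ∧ Even B.card) ∧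
    (∀ x ∈ Finset.Icc 1 (2 * n), ∃! B, B ∈ π ∧ x ∈ B) ∧
    ¬ ∃ a b c d : ℕ, a < b ∧ b < c ∧ c < d ∧
        ∃ B ∈ π, ∃ C ∈ π, B ≠ C ∧ a ∈ B ∧ c ∈ B ∧ b ∈ C ∧ d ∈ C)
/-- remove the entry at depth `i`, flipping the signs above it -/
def remW : List Bool → ℕ → List Bool
  | [], _ => []
  | _ :: w, 0 => w
  | b :: w, i + 1 => (!b) :: remW w i

/-- weighted count of stack histories -/
def FW : ℕ → List Bool → ℕ → ℕ
  | 0, w, k => if w = [] ∧ k = 0 then 1 else 0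
  | m + 1, w, k => FW m (true :: w) k +
      ∑ i ∈ Finset.range (k + 1), if w[i]? = some (i % 2 == 0) then FW m (remW w i) (k - i) else 0

/-- unrestricted path counts -/
def DW : ℕ → ℤ → ℤ
  | 0, h => if h = 0 then 1 else 0
  | m + 1, h => DW m (h - 1) + DW m (h + 1)

def WW (b a : ℕ) : List Bool := List.replicate b true ++ false :: false :: List.replicate a true

theorem remW_count (w : List Bool) : ∀ i, w.count false ≤ (remW w i).count false + (i + 1) := by
  induction w with
  | nil => intro i; simp
  | cons b w ih =>
    intro i
    cases i with
    | zero => cases b <;> simp [remW]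
    | succ i =>
      have := ih i
      cases b <;> simp [remW] <;> omega

theorem FW_zero (m : ℕ) : ∀ (w : List Bool) (k : ℕ), 2 * k < w.count false → FW m w k = 0 := by
  induction m with
  | zero =>
    intro w k h
    have : w ≠ [] := by rintro rfl; simp at h
    simp [FW, this]
  | succ m ih =>
    intro w k h
    rw [FW, ih _ _ (by simpa using h), zero_add]
    refine Finset.sum_eq_zero fun i hi => ?_
    split_ifs with hc
    · apply ih
      have := remW_count w i
      have hi := Finset.mem_range.1 hi
      rcases i with _ | i
      · cases w with
        | nil => simp at hc
        | cons b w =>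
          simp at hc
          subst hc
          simpa [remW] using h
      · omega
    · rfl

theorem DW_neg (m : ℕ) : ∀ h, DW m (-h) = DW m h := by
  induction m with
  | zero => intro h; simp [DW]
  | succ m ih =>
    intro h
    rw [DW, DW, ← ih (h - 1), ← ih (h + 1)]
    rw [show -(h - 1) = -h + 1 by ring, show -(h + 1) = -h - 1 by ring]; ring

theorem DW_big (m : ℕ) : ∀ h : ℤ, (m : ℤ) < h → DW m h = 0 := by
  induction m with
  | zero => intro h hh; simp [DW]; simp at hh; omega
  | succ m ih =>
    intro h hh
    push_cast at hh
    rw [DW, ih _ (by omega), ih _ (by omega)]; rfl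

theorem DW_choose (m : ℕ) : ∀ j : ℕ, DW m ((m : ℤ) - 2 * j) = m.choose j := by
  induction m with
  | zero => intro j; cases j <;> simp [DW]; omega
  | succ m ih =>
    intro j
    rw [DW]
    cases j with
    | zero =>
      have h1 := ih 0
      rw [DW_big m (_ + 1) (by push_cast; omega)]
      simp at h1 ⊢; exact h1
    | succ j =>
      rw [Nat.choose_succ_succ]
      push_cast
      rw [← ih j, ← ih (j + 1), add_comm]
      push_cast
      congr 2 <;> ring

def A0W (m : ℕ) (h : ℤ) : ℤ := DW m h - DW m (h + 2)

theorem A0W_succ (m : ℕ) (h : ℤ) : A0W (m + 1) h = A0W m (h - 1) + A0W m (h + 1) := by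
  simp only [A0W, DW]
  rw [show h + 2 - 1 = h + 1 by ring, show h - 1 + 2 = h + 1 by ring,
    show h + 1 + 2 = h + 2 + 1 by ring]; ring

theorem A0W_neg (m : ℕ) : A0W m (-1) = 0 := by
  have := DW_neg m 1
  simp [A0W, this]

theorem A0W_zero (h : ℤ) (hh : 0 < h) : A0W 0 h = 0 := by
  simp [A0W, DW, hh.ne', show h + 2 ≠ 0 by omega]

theorem FA0 (m : ℕ) : ∀ a : ℕ, (FW m (List.replicate a true) 0 : ℤ) = A0W m a := by
  induction m with
  | zero => intro a; cases a <;> simp [FW, A0W, DW] <;> omega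
  | succ m ih =>
    intro a
    rw [FW, ← List.replicate_succ, A0W_succ]
    cases a with
    | zero =>
      have h1 := ih 1
      simp [A0W_neg] at *; exact h1
    | succ a =>
      have h1 := ih (a + 1 + 1)
      have h2 := ih a
      simp [List.replicate_succ, remW] at *
      rw [h1, h2]; ring

theorem FA12 (m : ℕ) : ∀ a : ℕ, FW m (List.replicate a true) 1 = 0 ∧
    FW m (List.replicate a true) 2 = 0 := by
  induction m with
  | zero => intro a; simp [FW]
  | succ m ih =>
    intro a
    have h1 := ih (a + 1)
    rw [FW, FW, ← List.replicate_succ]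
    rcases a with _ | _ | _ | a
    · simp [Finset.sum_range_succ] at *
      exact h1
    · have := ih 0
      simp [Finset.sum_range_succ, List.replicate_succ, remW] at *
      simp [*]
    · have := ih 1
      simp [Finset.sum_range_succ, List.replicate_succ, remW] at *
      simp [*]
    · have := ih (a + 2)
      simp [Finset.sum_range_succ, List.replicate_succ, remW] at *
      simp [*, FW_zero]

theorem FB1 (m : ℕ) : ∀ b a : ℕ, (FW m (WW b a) 1 : ℤ) = A0W m (a + b + 2) := by
  induction m with
  | zero => intro b a; rw [A0W_zero _ (by omega)]; simp [FW]
  | succ m ih =>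
    intro b a
    have h1 := ih (b + 1) a
    rw [FW, A0W_succ]
    push_cast at h1
    rcases b with _ | _ | b
    · have h2 := FA0 m (a + 1)
      simp [Finset.sum_range_succ, List.replicate_succ, remW, WW] at *
      rw [h1, h2]; ring_nf
    · have h2 := ih 0 a
      simp [Finset.sum_range_succ, List.replicate_succ, remW, WW] at *
      rw [h1, h2, FW_zero] <;> simp; ring_nf
    · have h2 := ih (b + 1) a
      simp [Finset.sum_range_succ, List.replicate_succ, remW, WW] at *
      rw [h1, h2]; ring_nf

theorem FB2 (m : ℕ) : ∀ b a : ℕ, (FW m (WW b a) 2 : ℤ) =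
    ((if 1 ≤ a then 1 else 0) + (if 1 ≤ b then 1 else 0)) * A0W m (a + b + 2)
      + A0W m (a + b + 4) := by
  induction m with
  | zero => intro b a; rw [A0W_zero _ (by omega), A0W_zero _ (by omega)]; simp [FW]
  | succ m ih =>
    intro b a
    have h1 := ih (b + 1) a
    rw [FW, A0W_succ, A0W_succ]
    push_cast at h1
    rcases b with _ | _ | b
    · have h2 := FA0 m (a + 1)
      have h3 := (FA12 m (a + 1)).1
      rcases a with _ | a
      · simp [Finset.sum_range_succ, List.replicate_succ, remW, WW] at *
        rw [h1, h3]; push_cast; ring_nf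
      · simp [Finset.sum_range_succ, List.replicate_succ, remW, WW] at *
        rw [h1, h2, h3]; push_cast; ring_nf
    · have h2 := ih 0 a
      have h3 := FB1 m 0 a
      simp [Finset.sum_range_succ, List.replicate_succ, remW, WW] at *
      rw [h1, h2, h3]; split_ifs <;> ring_nf
    · have h2 := ih (b + 1) a
      rcases b with _ | b
      · simp [Finset.sum_range_succ, List.replicate_succ, remW, WW] at *
        rw [h1, h2]; ring_nf
      · simp [Finset.sum_range_succ, List.replicate_succ, remW, WW] at *
        rw [h1, h2, FW_zero] <;> simp; ring_nf

theorem FB3 (m : ℕ) : ∀ b a : ℕ, (FW m (WW b a) 3 : ℤ) =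
    (if 1 ≤ a then 1 else 0) * ((if 1 ≤ b then 1 else 0) * A0W m (a + b + 2) + A0W m (a + b + 4))
     + (if 1 ≤ b then 1 else 0) * A0W m (a + b + 4) + A0W m (a + b + 6) := by
  induction m with
  | zero =>
    intro b a
    rw [A0W_zero _ (by omega), A0W_zero _ (by omega), A0W_zero _ (by omega)]; simp [FW]
  | succ m ih =>
    intro b a
    have h1 := ih (b + 1) a
    rw [FW, A0W_succ, A0W_succ, A0W_succ]
    push_cast at h1
    rcases b with _ | _ | b
    · have h2 := (FA12 m (a + 1)).2
      have h3 := (FA12 m (a + 1)).1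
      rcases a with _ | _ | a
      · simp [Finset.sum_range_succ, List.replicate_succ, remW, WW] at *
        rw [h1, h2]; push_cast; ring_nf
      · simp [Finset.sum_range_succ, List.replicate_succ, remW, WW] at *
        rw [h1, h2, h3]; push_cast; ring_nf
      · simp [Finset.sum_range_succ, List.replicate_succ, remW, WW] at *
        rw [h1, h2, h3]; push_cast; ring_nf
    · have h2 := ih 0 a
      have h3 := FB2 m 0 a
      rcases a with _ | a
      · simp [Finset.sum_range_succ, List.replicate_succ, remW, WW] at *
        rw [h1, h2, h3]; ring_nf
      · simp [Finset.sum_range_succ, List.replicate_succ, remW, WW] at *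
        rw [h1, h2, h3]; push_cast; ring_nf
    · have h2 := ih (b + 1) a
      rcases b with _ | _ | b
      · simp [Finset.sum_range_succ, List.replicate_succ, remW, WW] at *
        rw [h1, h2, FW_zero m _ 0] <;> simp; split_ifs <;> ring_nf
      · simp [Finset.sum_range_succ, List.replicate_succ, remW, WW] at *
        rw [h1, h2, FW_zero m _ 1, FW_zero m _ 0] <;> simp; split_ifs <;> ring_nf
      · simp [Finset.sum_range_succ, List.replicate_succ, remW, WW] at *
        rw [h1, h2, FW_zero m _ 1] <;> simp; split_ifs <;> ring_nf

/-- closed form -/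
def GW (m : ℕ) (c : ℤ) : ℕ → ℤ
  | 0 => 2 * DW m (c + 8)
  | 1 => 2 * (DW m (c + 9) + DW m (c + 7))
  | 2 => 2 * (DW m (c + 10) + DW m (c + 8) + DW m (c + 6))
  | a + 3 => 2 * (DW m (c + a + 11) + DW m (c + a + 9) + DW m (c + a + 7) + DW m (c + a + 5))
      + a * (DW m (c + a + 3) + DW m (c + a + 5))

theorem GW_zero (c : ℤ) (hc : 0 ≤ c) (a : ℕ) : GW 0 c a = 0 := by
  rcases a with _ | _ | _ | a <;> simp only [GW, DW] <;> repeat rw [if_neg (by omega)]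
  all_goals simp

theorem FA4 (m : ℕ) : ∀ a : ℕ, (FW m (List.replicate a true) 4 : ℤ) = GW m 0 a := by
  induction m with
  | zero => intro a; rw [GW_zero _ le_rfl]; simp [FW]
  | succ m ih =>
    intro a
    have h1 := ih (a + 1)
    rw [FW]
    rcases a with _ | _ | _ | _ | a
    · simp [Finset.sum_range_succ, List.replicate_succ, remW, WW, GW, DW] at *
      rw [h1]; ring_nf
    · have h2 := ih 0
      simp [Finset.sum_range_succ, List.replicate_succ, remW, WW, GW, DW] at *
      rw [h1, h2]; ring_nf
    · have h2 := ih 1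
      simp [Finset.sum_range_succ, List.replicate_succ, remW, WW, GW, DW] at *
      rw [h1, h2]; ring_nf
    · have h2 := ih 2
      have h3 := FB2 m 0 0
      simp [Finset.sum_range_succ, List.replicate_succ, remW, WW, GW, DW, A0W] at *
      rw [h1, h2, h3]; ring_nf
    · have h2 := ih (a + 3)
      have h3 := FB2 m 0 (a + 1)
      rcases a with _ | a
      · simp [Finset.sum_range_succ, List.replicate_succ, remW, WW, GW, DW, A0W] at *
        rw [h1, h2, h3]; push_cast; ring_nf
      · simp [Finset.sum_range_succ, List.replicate_succ, remW, WW, GW, DW, A0W] at *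
        rw [h1, h2, h3, FW_zero m _ 0] <;> simp; ring_nf

theorem FA5 (m : ℕ) : ∀ a : ℕ, (FW m (List.replicate a true) 5 : ℤ) = GW m 2 a := by
  induction m with
  | zero => intro a; rw [GW_zero _ (by norm_num)]; simp [FW]
  | succ m ih =>
    intro a
    have h1 := ih (a + 1)
    rw [FW]
    rcases a with _ | _ | _ | _ | a
    · simp [Finset.sum_range_succ, List.replicate_succ, remW, WW, GW, DW] at *
      rw [h1]; ring_nf
    · have h2 := ih 0
      simp [Finset.sum_range_succ, List.replicate_succ, remW, WW, GW, DW] at *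
      rw [h1, h2]; ring_nf
    · have h2 := ih 1
      simp [Finset.sum_range_succ, List.replicate_succ, remW, WW, GW, DW] at *
      rw [h1, h2]; ring_nf
    · have h2 := ih 2
      have h3 := FB3 m 0 0
      simp [Finset.sum_range_succ, List.replicate_succ, remW, WW, GW, DW, A0W] at *
      rw [h1, h2, h3]; ring_nf
    · have h2 := ih (a + 3)
      have h3 := FB3 m 0 (a + 1)
      rcases a with _ | _ | a
      · simp [Finset.sum_range_succ, List.replicate_succ, remW, WW, GW, DW, A0W] at *
        rw [h1, h2, h3]; push_cast; ring_nf
      · simp [Finset.sum_range_succ, List.replicate_succ, remW, WW, GW, DW, A0W] at *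
        rw [h1, h2, h3, FW_zero m _ 1] <;> simp; ring_nf
      · simp [Finset.sum_range_succ, List.replicate_succ, remW, WW, GW, DW, A0W] at *
        rw [h1, h2, h3, FW_zero m _ 1] <;> simp; ring_nf

theorem DW_even (n c : ℕ) : DW (2 * n) (2 * c) =
    ((if c ≤ n then (2 * n).choose (n - c) else 0 : ℕ) : ℤ) := by
  split_ifs with h
  · rw [← DW_choose]
    congr 1
    push_cast [h]; ring
  · rw [DW_big]; · rfl
    push_cast; omega

theorem FW_four (n : ℕ) : FW (2 * n) [] 4 = 2 * (if 4 ≤ n then (2 * n).choose (n - 4) else 0) := by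
  have h1 := FA4 (2 * n) 0
  have h2 := DW_even n 4
  norm_num [GW] at h1 h2
  rw [h2] at h1
  exact_mod_cast h1

theorem FW_five (n : ℕ) : FW (2 * n) [] 5 = 2 * (if 5 ≤ n then (2 * n).choose (n - 5) else 0) := by
  have h1 := FA5 (2 * n) 0
  have h2 := DW_even n 5
  norm_num [GW] at h1 h2
  rw [h2] at h1
  exact_mod_cast h1

structure GoodP (N : ℕ) (L : List ℕ) (x : ℕ) (π : Finset (Finset ℕ)) : Prop where
  sub : ∀ B ∈ π, ∀ y ∈ B, y ∈ L ∨ (x < y ∧ y ≤ N)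
  crd : ∀ B ∈ π, B.card = 2
  cov : ∀ y, (y ∈ L ∨ (x < y ∧ y ≤ N)) → ∃ B ∈ π, y ∈ B
  uniq : ∀ B ∈ π, ∀ C ∈ π, ∀ y ∈ B, y ∈ C → B = C
  par : ParityReversing π
  nl : ∀ B ∈ π, ∃ y ∈ B, x < y

theorem pair_inj {a b c d : ℕ} (h1 : a < b) (h2 : c < d) (h : ({a, b} : Finset ℕ) = {c, d}) :
    a = c ∧ b = d := by
  have ha : a ∈ ({c, d} : Finset ℕ) := h ▸ (by simp)
  have hb : b ∈ ({c, d} : Finset ℕ) := h ▸ (by simp)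
  have hc : c ∈ ({a, b} : Finset ℕ) := h ▸ (by simp)
  simp at ha hb hc
  omega

theorem card_two_eq {B : Finset ℕ} (hB : B.card = 2) {a b : ℕ} (ha : a ∈ B) (hb : b ∈ B)
    (hab : a ≠ b) : B = {a, b} := by
  symm
  apply Finset.eq_of_subset_of_card_le
  · intro y; simp; rintro (rfl | rfl) <;> assumption
  · rw [hB, Finset.card_pair hab]

theorem mem_eraseIdx' {L : List ℕ} (hL : L.Pairwise (· > ·)) {i : ℕ} (hi : i < L.length) (y : ℕ) :
    y ∈ L.eraseIdx i ↔ y ∈ L ∧ y ≠ L[i] := by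
  have hn : L.Nodup := hL.imp (fun h => ne_of_gt h)
  rw [List.mem_eraseIdx_iff_getElem]
  constructor
  · rintro ⟨j, hj, hne, rfl⟩
    exact ⟨List.getElem_mem _, fun h => hne (hn.getElem_inj_iff.1 h)⟩
  · rintro ⟨hy, hne⟩
    obtain ⟨j, hj, rfl⟩ := List.getElem_of_mem hy
    exact ⟨j, hj, fun h => hne (by subst h; rfl), rfl⟩

theorem getElem_lt_iff' {L : List ℕ} (hL : L.Pairwise (· > ·)) {i j : ℕ} (hi : i < L.length)
    (hj : j < L.length) : L[i] < L[j] ↔ j < i := by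
  rw [List.pairwise_iff_getElem] at hL
  constructor
  · intro h
    by_contra hc
    rcases Nat.lt_or_ge i j with h' | h'
    · have := hL i j hi hj h'; omega
    · have : i = j := by omega
      subst this; omega
  · intro h; exact hL j i hj hi h

theorem crNum_insert {N : ℕ} {L : List ℕ} {x : ℕ} {π : Finset (Finset ℕ)}
    (hL : L.Pairwise (· > ·)) (hx : ∀ y ∈ L, y ≤ x) {i : ℕ} (hi : i < L.length)
    (hg : GoodP N (L.eraseIdx i) (x + 1) π) :
    crNum (insert {L[i], x + 1} π) = crNum π + i := by
  have hLi : L[i] < x + 1 := Nat.lt_succ_of_le (hx _ (List.getElem_mem _))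
  have hn : L.Nodup := hL.imp (fun h => ne_of_gt h)
  have hB0 : ({L[i], x + 1} : Finset ℕ) ∉ π := by
    intro h
    rcases hg.sub _ h (x + 1) (by simp) with h' | h'
    · rw [mem_eraseIdx' hL hi] at h'
      have := hx _ h'.1; omega
    · omega
  have hcount : Set.ncard {C | C ∈ π ∧ CrossAsym {L[i], x + 1} C} = i := by
    have hcov : ∀ j (hj : j < i), ∃ B ∈ π, L[j] ∈ B := by
      intro j hj
      apply hg.cov
      left
      rw [mem_eraseIdx' hL hi]
      refine ⟨List.getElem_mem _, fun h => ?_⟩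
      have := hn.getElem_inj_iff.1 h; omega
    have hform : ∀ j (hj : j < i), ∀ B ∈ π, L[j] ∈ B → ∃ y, x + 1 < y ∧ B = {L[j], y} := by
      intro j hj B hB hm
      obtain ⟨y, hy, hxy⟩ := hg.nl B hB
      have := hx L[j] (List.getElem_mem _)
      exact ⟨y, hxy, card_two_eq (hg.crd B hB) hm hy (by omega)⟩
    choose f hf1 hf2 using hcov
    refine Set.ncard_eq_of_bijective f ?_ ?_ ?_
    · rintro C ⟨hC, a, b, c, d, hac, hcb, hbd, h1, rfl⟩
      obtain ⟨rfl, rfl⟩ := pair_inj hLi (by omega) h1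
      rcases hg.sub _ hC c (by simp) with h' | h'
      · rw [mem_eraseIdx' hL hi] at h'
        obtain ⟨j, hj, rfl⟩ := List.getElem_of_mem h'.1
        have hji := (getElem_lt_iff' hL hi hj).1 hac
        exact ⟨j, hji, hg.uniq _ (hf1 j hji) _ hC _ (hf2 j hji) (by simp)⟩
      · omega
    · intro j hj
      obtain ⟨y, hy, he⟩ := hform j hj _ (hf1 j hj) (hf2 j hj)
      have := hx L[j] (List.getElem_mem _)
      exact ⟨hf1 j hj, L[i], x + 1, L[j], y, (getElem_lt_iff' hL hi (by omega)).2 hj, by omega, hy,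
        rfl, he⟩
    · intro j j' hj hj' h
      obtain ⟨y, hy, he⟩ := hform j hj _ (hf1 j hj) (hf2 j hj)
      have h2 := hf2 j' hj'
      rw [← h, he] at h2
      have := hx L[j'] (List.getElem_mem _)
      simp only [Finset.mem_insert, Finset.mem_singleton] at h2
      rcases h2 with h2 | h2
      · exact (hn.getElem_inj_iff.1 h2).symm
      · omega
  have hfin : {p : Finset ℕ × Finset ℕ | p.1 ∈ π ∧ p.2 ∈ π ∧ CrossAsym p.1 p.2}.Finite :=
    (π ×ˢ π).finite_toSet.subset (fun p hp => by simpa using ⟨hp.1, hp.2.1⟩)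
  have hfin2 : {C | C ∈ π ∧ CrossAsym {L[i], x + 1} C}.Finite :=
    π.finite_toSet.subset (fun p hp => hp.1)
  have hset : {p : Finset ℕ × Finset ℕ | p.1 ∈ insert {L[i], x + 1} π ∧
      p.2 ∈ insert {L[i], x + 1} π ∧ CrossAsym p.1 p.2} =
      {p : Finset ℕ × Finset ℕ | p.1 ∈ π ∧ p.2 ∈ π ∧ CrossAsym p.1 p.2} ∪
      (fun C => (({L[i], x + 1} : Finset ℕ), C)) '' {C | C ∈ π ∧ CrossAsym {L[i], x + 1} C} := by
    ext ⟨P, Q⟩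
    simp only [Set.mem_setOf_eq, Set.mem_union, Set.mem_image, Finset.mem_insert, Prod.mk.injEq]
    constructor
    · rintro ⟨hP | hP, hQ | hQ, hc⟩
      · exfalso
        subst hP; subst hQ
        obtain ⟨a, b, c, d, hac, hcb, hbd, h1, h2⟩ := hc
        have := pair_inj hLi (by omega) h1
        have := pair_inj hLi (by omega) h2
        omega
      · right
        subst hP
        exact ⟨Q, ⟨hQ, hc⟩, rfl, rfl⟩
      · exfalso
        subst hQ
        obtain ⟨a, b, c, d, hac, hcb, hbd, rfl, h2⟩ := hc
        have := pair_inj hLi (by omega) h2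
        obtain ⟨y, hy, hxy⟩ := hg.nl _ hP
        simp at hy
        omega
      · exact Or.inl ⟨hP, hQ, hc⟩
    · rintro (⟨hP, hQ, hc⟩ | ⟨C, ⟨hC, hc⟩, rfl, rfl⟩)
      · exact ⟨Or.inr hP, Or.inr hQ, hc⟩
      · exact ⟨Or.inl rfl, Or.inr hC, hc⟩
  unfold crNum
  rw [hset, Set.ncard_union_eq _ hfin (hfin2.image _), Set.ncard_image_of_injective, hcount]
  · intro C D h; simpa using h
  · rw [Set.disjoint_left]
    rintro p hp ⟨C, hC, rfl⟩
    exact hB0 hp.1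

theorem good_insert {N : ℕ} {L : List ℕ} {x : ℕ} {π : Finset (Finset ℕ)}
    (hL : L.Pairwise (· > ·)) (hx : ∀ y ∈ L, y ≤ x) (hN : x < N) {i : ℕ} (hi : i < L.length)
    (hp : (L[i] + x) % 2 = 0) (hg : GoodP N (L.eraseIdx i) (x + 1) π) :
    GoodP N L x (insert {L[i], x + 1} π) := by
  have hLi : L[i] < x + 1 := Nat.lt_succ_of_le (hx _ (List.getElem_mem _))
  have hLm : L[i] ∈ L := List.getElem_mem _
  have hm := mem_eraseIdx' hL hi
  have hout : ∀ B ∈ π, ∀ y ∈ B, y ≠ L[i] ∧ y ≠ x + 1 := by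
    intro B hB y hy
    rcases hg.sub B hB y hy with h | h
    · rw [hm] at h
      have := hx _ h.1
      exact ⟨h.2, by omega⟩
    · omega
  constructor
  · intro B hB y hy
    rcases Finset.mem_insert.1 hB with rfl | hB
    · simp only [Finset.mem_insert, Finset.mem_singleton] at hy
      rcases hy with rfl | rfl
      · exact Or.inl hLm
      · right; omega
    · rcases hg.sub B hB y hy with h | h
      · rw [hm] at h; exact Or.inl h.1
      · right; omega
  · intro B hB
    rcases Finset.mem_insert.1 hB with rfl | hB
    · exact Finset.card_pair (by omega)
    · exact hg.crd B hB
  · intro y hy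
    by_cases h1 : y = L[i] ∨ y = x + 1
    · exact ⟨_, Finset.mem_insert_self _ _, by simpa using h1⟩
    · push Not at h1
      obtain ⟨B, hB, hyB⟩ := hg.cov y (by
        rw [hm]
        rcases hy with hy | hy
        · exact Or.inl ⟨hy, h1.1⟩
        · right; omega)
      exact ⟨B, Finset.mem_insert_of_mem hB, hyB⟩
  · intro B hB C hC y hyB hyC
    rcases Finset.mem_insert.1 hB with rfl | hB <;> rcases Finset.mem_insert.1 hC with rfl | hC
    · rfl
    · have := hout C hC y hyC
      simp only [Finset.mem_insert, Finset.mem_singleton] at hyB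
      omega
    · have := hout B hB y hyB
      simp only [Finset.mem_insert, Finset.mem_singleton] at hyC
      omega
    · exact hg.uniq B hB C hC y hyB hyC
  · intro B hB
    rcases Finset.mem_insert.1 hB with rfl | hB
    · rcases Nat.even_or_odd L[i] with h | h
      · refine ⟨x + 1, L[i], Finset.pair_comm _ _, ?_, h⟩
        rw [Nat.even_iff] at h
        rw [Nat.odd_iff]; omega
      · refine ⟨L[i], x + 1, rfl, h, ?_⟩
        rw [Nat.odd_iff] at h
        rw [Nat.even_iff]; omega
    · exact hg.par B hB
  · intro B hB
    rcases Finset.mem_insert.1 hB with rfl | hB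
    · exact ⟨x + 1, by simp, by omega⟩
    · obtain ⟨y, hy, h⟩ := hg.nl B hB
      exact ⟨y, hy, by omega⟩

theorem good_erase {N : ℕ} {L : List ℕ} {x : ℕ} {π : Finset (Finset ℕ)}
    (hL : L.Pairwise (· > ·)) (hx : ∀ y ∈ L, y ≤ x) {i : ℕ} (hi : i < L.length)
    (hg : GoodP N L x π) (hB : ({L[i], x + 1} : Finset ℕ) ∈ π) :
    (L[i] + x) % 2 = 0 ∧ GoodP N (L.eraseIdx i) (x + 1) (π.erase {L[i], x + 1}) := by
  have hLi : L[i] < x + 1 := Nat.lt_succ_of_le (hx _ (List.getElem_mem _))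
  have hLm : L[i] ∈ L := List.getElem_mem _
  have hm := mem_eraseIdx' hL hi
  have hout : ∀ B ∈ π.erase {L[i], x + 1}, ∀ y ∈ B, y ≠ L[i] ∧ y ≠ x + 1 := by
    intro B hB' y hy
    obtain ⟨hne, hB'⟩ := Finset.mem_erase.1 hB'
    constructor
    · rintro rfl
      exact hne (hg.uniq _ hB' _ hB _ hy (by simp))
    · rintro rfl
      exact hne (hg.uniq _ hB' _ hB _ hy (by simp))
  refine ⟨?_, ?_⟩
  · obtain ⟨a, b, he, ha, hb⟩ := hg.par _ hB
    have h1 : L[i] ∈ ({a, b} : Finset ℕ) := he ▸ (by simp)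
    have h2 : x + 1 ∈ ({a, b} : Finset ℕ) := he ▸ (by simp)
    rw [Nat.odd_iff] at ha
    rw [Nat.even_iff] at hb
    simp only [Finset.mem_insert, Finset.mem_singleton] at h1 h2
    omega
  constructor
  · intro B hB' y hy
    have h1 := hout B hB' y hy
    rw [hm]
    rcases hg.sub B (Finset.mem_of_mem_erase hB') y hy with h | h
    · exact Or.inl ⟨h, h1.1⟩
    · right; omega
  · intro B hB'
    exact hg.crd B (Finset.mem_of_mem_erase hB')
  · intro y hy
    rw [hm] at hy
    obtain ⟨B, hB', hyB⟩ := hg.cov y (by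
      rcases hy with hy | hy
      · exact Or.inl hy.1
      · right; omega)
    refine ⟨B, Finset.mem_erase.2 ⟨?_, hB'⟩, hyB⟩
    rintro rfl
    simp only [Finset.mem_insert, Finset.mem_singleton] at hyB
    rcases hy with hy | hy
    · have := hx _ hy.1
      have := hy.2
      omega
    · omega
  · intro B hB' C hC y hyB hyC
    exact hg.uniq B (Finset.mem_of_mem_erase hB') C (Finset.mem_of_mem_erase hC) y hyB hyC
  · intro B hB'
    exact hg.par B (Finset.mem_of_mem_erase hB')
  · intro B hB'
    obtain ⟨y, hy, h⟩ := hg.nl B (Finset.mem_of_mem_erase hB')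
    have := hout B hB' y hy
    exact ⟨y, hy, by omega⟩

theorem good_push {N : ℕ} {L : List ℕ} {x : ℕ} {π : Finset (Finset ℕ)}
    (hx : ∀ y ∈ L, y ≤ x) (hN : x < N) :
    (GoodP N L x π ∧ ∀ y ∈ L, ({y, x + 1} : Finset ℕ) ∉ π) ↔ GoodP N ((x + 1) :: L) (x + 1) π := by
  have hiff : ∀ y, (y ∈ (x + 1) :: L ∨ (x + 1 < y ∧ y ≤ N)) ↔ (y ∈ L ∨ (x < y ∧ y ≤ N)) := by
    intro y
    rw [List.mem_cons]
    by_cases h : y ∈ L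
    · simp [h]
    · simp only [h, or_false, false_or]; omega
  constructor
  · rintro ⟨hg, hno⟩
    refine ⟨fun B hB y hy => (hiff y).2 (hg.sub B hB y hy), hg.crd,
      fun y hy => hg.cov y ((hiff y).1 hy), hg.uniq, hg.par, ?_⟩
    intro B hB
    obtain ⟨y, hy, h⟩ := hg.nl B hB
    by_cases hyx : y = x + 1
    · subst hyx
      obtain ⟨z, hz, hne⟩ := Finset.exists_mem_ne (by rw [hg.crd B hB]; norm_num) (x + 1)
      rcases hg.sub B hB z hz with h' | h'
      · exfalso
        apply hno z h'
        rw [← card_two_eq (hg.crd B hB) hz hy hne]; exact hB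
      · exact ⟨z, hz, by omega⟩
    · exact ⟨y, hy, by omega⟩
  · intro hg
    refine ⟨⟨fun B hB y hy => (hiff y).1 (hg.sub B hB y hy), hg.crd,
      fun y hy => hg.cov y ((hiff y).2 hy), hg.uniq, hg.par, ?_⟩, ?_⟩
    · intro B hB
      obtain ⟨y, hy, h⟩ := hg.nl B hB
      exact ⟨y, hy, by omega⟩
    · intro z hz hB
      obtain ⟨y, hy, h⟩ := hg.nl _ hB
      have := hx z hz
      simp only [Finset.mem_insert, Finset.mem_singleton] at hy
      omega

noncomputable def SP (N : ℕ) (L : List ℕ) (x k : ℕ) : Finset (Finset (Finset ℕ)) :=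
  (Finset.range (N + 1)).powerset.powerset.filter (fun π => GoodP N L x π ∧ crNum π = k)

theorem mem_SP {N : ℕ} {L : List ℕ} {x k : ℕ} {π : Finset (Finset ℕ)}
    (hx : ∀ y ∈ L, y ≤ x) (hN : x ≤ N) : π ∈ SP N L x k ↔ GoodP N L x π ∧ crNum π = k := by
  unfold SP
  rw [Finset.mem_filter, and_iff_right_iff_imp]
  rintro ⟨hg, -⟩
  rw [Finset.mem_powerset]
  intro B hB
  rw [Finset.mem_powerset]
  intro y hy
  rw [Finset.mem_range]
  rcases hg.sub B hB y hy with h | h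
  · have := hx y h; omega
  · omega

def sgW : ℕ → List ℕ → List Bool
  | _, [] => []
  | x, l :: L => ((l + x) % 2 == 0) :: sgW (x + 1) L

theorem sgW_two (L : List ℕ) : ∀ x, sgW (x + 2) L = sgW x L := by
  induction L with
  | nil => intro x; rfl
  | cons l L ih =>
    intro x
    rw [sgW, sgW, show x + 2 + 1 = x + 1 + 2 by ring, ih]
    rw [show l + (x + 2) = l + x + 2 by ring, Nat.add_mod_right]

theorem sgW_push (L : List ℕ) (x : ℕ) : sgW (x + 1) ((x + 1) :: L) = true :: sgW x L := by
  rw [sgW, show x + 1 + 1 = x + 2 by ring, sgW_two]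
  congr 1
  simp; omega

theorem sgW_rem (L : List ℕ) : ∀ x i, i < L.length → remW (sgW x L) i = sgW (x + 1) (L.eraseIdx i) := by
  induction L with
  | nil => intro x i h; simp at h
  | cons l L ih =>
    intro x i h
    cases i with
    | zero => simp [sgW, remW]
    | succ i =>
      rw [sgW, remW, ih _ _ (by simpa using h), List.eraseIdx_cons_succ, sgW]
      congr 1
      rcases Nat.mod_two_eq_zero_or_one (l + x) with h | h
      · have : (l + (x + 1)) % 2 = 1 := by omega
        simp [h, this]
      · have : (l + (x + 1)) % 2 = 0 := by omega
        simp [h, this]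

theorem sgW_get (L : List ℕ) : ∀ x i, (sgW x L)[i]? = L[i]?.map (fun l => (l + x + i) % 2 == 0) := by
  induction L with
  | nil => intro x i; simp [sgW]
  | cons l L ih =>
    intro x i
    cases i with
    | zero => simp [sgW]
    | succ i =>
      simp only [sgW, List.getElem?_cons_succ, ih]
      congr 1; funext y; congr 2; omega

theorem sgW_ok {L : List ℕ} {x i : ℕ} (hi : i < L.length) :
    (sgW x L)[i]? = some (i % 2 == 0) ↔ (L[i] + x) % 2 = 0 := by
  rw [sgW_get, List.getElem?_eq_getElem hi]
  simp only [Option.map_some, Option.some.injEq]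
  rcases Nat.mod_two_eq_zero_or_one i with h | h
  · simp [h]; omega
  · simp [h]; omega

theorem card_SP (N : ℕ) (m : ℕ) : ∀ (L : List ℕ) (x k : ℕ), x + m = N → L.Pairwise (· > ·) →
    (∀ y ∈ L, y ≤ x) → (SP N L x k).card = FW m (sgW x L) k := by
  induction m with
  | zero =>
    intro L x k hN hL hx
    have hxN : x = N := by omega
    subst hxN
    have hemp : ∀ π, GoodP x L x π → π = ∅ := by
      intro π hg
      rw [Finset.eq_empty_iff_forall_notMem]
      intro B hB
      obtain ⟨y, hy, h⟩ := hg.nl B hB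
      rcases hg.sub B hB y hy with h' | h'
      · have := hx y h'; omega
      · omega
    have hcr : crNum ∅ = 0 := by simp [crNum]
    rw [FW]
    split_ifs with hc
    · obtain ⟨h1, rfl⟩ := hc
      have hLe : L = [] := by cases L with
        | nil => rfl
        | cons l L => simp [sgW] at h1
      subst hLe
      rw [Finset.card_eq_one]
      refine ⟨∅, ?_⟩
      ext π
      rw [mem_SP hx le_rfl, Finset.mem_singleton]
      constructor
      · rintro ⟨hg, -⟩; exact hemp π hg
      · rintro rfl
        refine ⟨⟨?_, ?_, ?_, ?_, ?_, ?_⟩, hcr⟩ <;> try simp [ParityReversing]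
        all_goals omega
    · rw [Finset.card_eq_zero, Finset.eq_empty_iff_forall_notMem]
      intro π hπ
      rw [mem_SP hx le_rfl] at hπ
      obtain ⟨hg, hk⟩ := hπ
      have := hemp π hg
      subst this
      apply hc
      refine ⟨?_, by rw [← hk, hcr]⟩
      cases L with
      | nil => rfl
      | cons l L =>
        obtain ⟨B, hB, -⟩ := hg.cov l (by simp)
        simp at hB
  | succ m ih =>
    intro L x k hN hL hx
    have hxN : x < N := by omega
    have hn : L.Nodup := hL.imp (fun h => ne_of_gt h)
    have hx' : ∀ i, ∀ y ∈ L.eraseIdx i, y ≤ x + 1 := fun i y hy =>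
      (hx y (List.mem_of_mem_eraseIdx hy)).trans (by omega)
    have hx'' : ∀ y ∈ (x + 1) :: L, y ≤ x + 1 := by
      intro y hy
      rcases List.mem_cons.1 hy with rfl | hy
      · exact le_rfl
      · have := hx y hy; omega
    rw [Finset.card_eq_sum_card_fiberwise (t := Finset.range (L.length + 1))
      (f := fun π => L.findIdx (fun y => decide (({y, x + 1} : Finset ℕ) ∈ π)))]
    swap
    · intro π _
      simp only [Finset.coe_range, Set.mem_Iio]
      exact Nat.lt_succ_of_le List.findIdx_le_length
    rw [Finset.sum_range_succ, add_comm, FW]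
    congr 1
    · rw [← sgW_push, ← ih _ _ _ (by omega) _ hx'']
      · congr 1
        ext π
        rw [Finset.mem_filter, mem_SP hx hxN.le, mem_SP hx'' hxN, ← good_push hx hxN,
          List.findIdx_eq_length]
        simp only [decide_eq_false_iff_not]
        tauto
      · rw [List.pairwise_cons]
        exact ⟨fun y hy => Nat.lt_succ_of_le (hx y hy), hL⟩
    · have hfib : ∀ i ∈ Finset.range L.length,
          ((SP N L x k).filter (fun π =>
            L.findIdx (fun y => decide (({y, x + 1} : Finset ℕ) ∈ π)) = i)).card =
          if i ≤ k ∧ (sgW x L)[i]? = some (i % 2 == 0) then FW m (remW (sgW x L) i) (k - i)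
            else 0 := by
        intro i hi
        have hi := Finset.mem_range.1 hi
        have hmem : ∀ π, π ∈ (SP N L x k).filter (fun π =>
            L.findIdx (fun y => decide (({y, x + 1} : Finset ℕ) ∈ π)) = i) ↔
            GoodP N L x π ∧ crNum π = k ∧ ({L[i], x + 1} : Finset ℕ) ∈ π := by
          intro π
          rw [Finset.mem_filter, mem_SP hx hxN.le, List.findIdx_eq hi]
          simp only [decide_eq_true_eq, decide_eq_false_iff_not]
          constructor
          · rintro ⟨⟨h1, h2⟩, h3, -⟩; exact ⟨h1, h2, h3⟩
          · rintro ⟨h1, h2, h3⟩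
            refine ⟨⟨h1, h2⟩, h3, ?_⟩
            intro j hj h4
            have h5 := h1.uniq _ h3 _ h4 (x + 1) (by simp) (by simp)
            have h6 := hx L[i] (List.getElem_mem _)
            have h7 := hx L[j] (List.getElem_mem _)
            have h8 := (pair_inj (by omega) (by omega) h5).1
            have := hn.getElem_inj_iff.1 h8
            omega
        simp only [sgW_ok hi]
        split_ifs with hc
        · rw [sgW_rem _ _ _ hi, ← ih _ _ _ (by omega) (hL.sublist (List.eraseIdx_sublist _ _)) (hx' i)]
          refine Finset.card_bij' (fun π _ => π.erase {L[i], x + 1})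
            (fun π _ => insert {L[i], x + 1} π) ?_ ?_ ?_ ?_
          · intro π hπ
            obtain ⟨h1, h2, h3⟩ := (hmem π).1 hπ
            have hg := (good_erase hL hx hi h1 h3).2
            have := crNum_insert hL hx hi hg
            rw [Finset.insert_erase h3] at this
            rw [mem_SP (hx' i) hxN]
            exact ⟨hg, by omega⟩
          · intro π hπ
            rw [mem_SP (hx' i) hxN] at hπ
            rw [hmem]
            refine ⟨good_insert hL hx hxN hi hc.2 hπ.1, ?_, Finset.mem_insert_self _ _⟩
            rw [crNum_insert hL hx hi hπ.1]; omega
          · intro π hπ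
            exact Finset.insert_erase ((hmem π).1 hπ).2.2
          · intro π hπ
            rw [mem_SP (hx' i) hxN] at hπ
            apply Finset.erase_insert
            intro h
            rcases hπ.1.sub _ h (x + 1) (by simp) with h' | h'
            · have := hx _ (List.mem_of_mem_eraseIdx h'); omega
            · omega
        · rw [Finset.card_eq_zero, Finset.eq_empty_iff_forall_notMem]
          intro π hπ
          obtain ⟨h1, h2, h3⟩ := (hmem π).1 hπ
          obtain ⟨hp, hg⟩ := good_erase hL hx hi h1 h3
          have := crNum_insert hL hx hi hg
          rw [Finset.insert_erase h3] at this
          exact hc ⟨by omega, hp⟩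
      rw [Finset.sum_congr rfl hfib]
      have e1 := Finset.sum_subset (s₁ := Finset.range L.length)
        (s₂ := Finset.range (L.length + k + 1))
        (f := fun i => if i ≤ k ∧ (sgW x L)[i]? = some (i % 2 == 0)
          then FW m (remW (sgW x L) i) (k - i) else 0)
        (Finset.range_subset_range.2 (by omega)) (by
          intro i _ hi
          simp only [Finset.mem_range, not_lt] at hi
          rw [if_neg]
          rw [sgW_get, List.getElem?_eq_none hi]
          simp)
      have e2 := Finset.sum_subset (s₁ := Finset.range (k + 1))
        (s₂ := Finset.range (L.length + k + 1))
        (f := fun i => if i ≤ k ∧ (sgW x L)[i]? = some (i % 2 == 0)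
          then FW m (remW (sgW x L) i) (k - i) else 0)
        (Finset.range_subset_range.2 (by omega)) (by
          intro i _ hi
          simp only [Finset.mem_range, not_lt] at hi
          rw [if_neg]
          omega)
      rw [e1, ← e2]
      refine Finset.sum_congr rfl fun i hi => ?_
      have : i ≤ k := by have := Finset.mem_range.1 hi; omega
      simp only [this, true_and]

theorem rCount_eq (n k : ℕ) : rCount n k = FW (2 * n) [] k := by
  have h := card_SP (2 * n) (2 * n) [] 0 k (by omega) List.Pairwise.nil (by simp)
  rw [sgW] at h
  rw [← h, ← Set.ncard_coe_finset]
  unfold rCount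
  congr 1
  ext π
  rw [Finset.mem_coe, mem_SP (by simp) (by omega)]
  simp only [Set.mem_setOf_eq]
  constructor
  · rintro ⟨⟨h1, h2⟩, h3, h4⟩
    have hI : ∀ B ∈ π, ∀ y ∈ B, 0 < y ∧ y ≤ 2 * n := by
      intro B hB y hy
      have := Finset.mem_Icc.1 ((h1 B hB).2 hy)
      omega
    refine ⟨⟨fun B hB y hy => Or.inr (hI B hB y hy), fun B hB => (h1 B hB).1, ?_, ?_, h3, ?_⟩, h4⟩
    · intro y hy
      obtain ⟨B, hB, -⟩ := h2 y (by
        rcases hy with hy | hy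
        · simp at hy
        · rw [Finset.mem_Icc]; omega)
      exact ⟨B, hB.1, hB.2⟩
    · intro B hB C hC y hyB hyC
      exact (h2 y ((h1 B hB).2 hyB)).unique ⟨hB, hyB⟩ ⟨hC, hyC⟩
    · intro B hB
      have : B.Nonempty := by rw [← Finset.card_pos, (h1 B hB).1]; norm_num
      obtain ⟨y, hy⟩ := this
      exact ⟨y, hy, (hI B hB y hy).1⟩
  · rintro ⟨hg, h4⟩
    refine ⟨⟨fun B hB => ⟨hg.crd B hB, ?_⟩, ?_⟩, hg.par, h4⟩
    · intro y hy
      rw [Finset.mem_Icc]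
      rcases hg.sub B hB y hy with h | h
      · simp at h
      · omega
    · intro y hy
      rw [Finset.mem_Icc] at hy
      obtain ⟨B, hB, hyB⟩ := hg.cov y (Or.inr (by omega))
      exact ⟨B, ⟨hB, hyB⟩, fun C hC => hg.uniq C hC.1 B hB y hC.2 hyB⟩

/-- `r_{n,4} = 2·C(2n, n−4)` and `r_{n,5} = 2·C(2n, n−5)`, with the convention that the
binomial coefficient is `0` when `4 > n` (resp. `5 > n`). -/
theorem rCount_four_five (n : ℕ) (hn : 1 ≤ n) :
    rCount n 4 = 2 * (if 4 ≤ n then (2 * n).choose (n - 4) else 0) ∧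
    rCount n 5 = 2 * (if 5 ≤ n then (2 * n).choose (n - 5) else 0) := by
  rw [rCount_eq, rCount_eq]
  exact ⟨FW_four n, FW_five n⟩
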